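/- arXiv:2605.19691 — 2 statements merged into one kernel-verified Lean document; each statement's English description precedes it below -/
import Mathlib

section
/- Let K be a field and let B₁,…,B_k ∈ K^{m×n} be a linearly independent family of matrices generating a column-nondegenerate matrix rank-metric code C = span_K{B₁,…,B_k}, with associated column-system S. Let t ∈ {1,…,k} and s ∈ {1,…,n}. Then d_t^r(C) ≥ s if and only if every subspace W ⊆ K^k with dim_K W = k − t satisfies dim_K S_c(W) ≤ n − s. -/
open Matrix

section Defs

variable {K : Type*} [Field K]

/-- The row space of a matrix: the span of its rows in `K^b`. -/
noncomputable def rowSpace {a b : ℕ} (M : Matrix (Fin a) (Fin b) K) :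
    Submodule K (Fin b → K) :=
  Submodule.span K (Set.range fun i => M i)

/-- The column space of a matrix: the span of its columns in `K^a`. -/
noncomputable def colSpace {a b : ℕ} (M : Matrix (Fin a) (Fin b) K) :
    Submodule K (Fin a → K) :=
  Submodule.span K (Set.range fun j i => M i j)

/-- `Sc S U = {X ∈ S : colsp(X) ⊆ U}`, a subspace of the matrix space. -/
noncomputable def Sc {a b : ℕ} (S : Submodule K (Matrix (Fin a) (Fin b) K))
    (U : Submodule K (Fin a → K)) : Submodule K (Matrix (Fin a) (Fin b) K) where
  carrier := {X | X ∈ S ∧ colSpace X ≤ U}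
  add_mem' := by
    rintro X Y ⟨hXS, hXU⟩ ⟨hYS, hYU⟩
    refine ⟨S.add_mem hXS hYS, ?_⟩
    rw [colSpace, Submodule.span_le]
    rintro v ⟨j, rfl⟩
    have hx : (fun i => X i j) ∈ U := hXU (Submodule.subset_span ⟨j, rfl⟩)
    have hy : (fun i => Y i j) ∈ U := hYU (Submodule.subset_span ⟨j, rfl⟩)
    exact U.add_mem hx hy
  zero_mem' := by
    refine ⟨S.zero_mem, ?_⟩
    rw [colSpace, Submodule.span_le]
    rintro v ⟨j, rfl⟩
    exact U.zero_mem
  smul_mem' := by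
    rintro c X ⟨hXS, hXU⟩
    refine ⟨S.smul_mem c hXS, ?_⟩
    rw [colSpace, Submodule.span_le]
    rintro v ⟨j, rfl⟩
    exact U.smul_mem c (hXU (Submodule.subset_span ⟨j, rfl⟩))

/-- `Sr S U = {X ∈ S : rowsp(X) ⊆ U}`, a subspace of the matrix space. -/
noncomputable def Sr {a b : ℕ} (S : Submodule K (Matrix (Fin a) (Fin b) K))
    (U : Submodule K (Fin b → K)) : Submodule K (Matrix (Fin a) (Fin b) K) where
  carrier := {X | X ∈ S ∧ rowSpace X ≤ U}
  add_mem' := by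
    rintro X Y ⟨hXS, hXU⟩ ⟨hYS, hYU⟩
    refine ⟨S.add_mem hXS hYS, ?_⟩
    rw [rowSpace, Submodule.span_le]
    rintro v ⟨i, rfl⟩
    have hx : X i ∈ U := hXU (Submodule.subset_span ⟨i, rfl⟩)
    have hy : Y i ∈ U := hYU (Submodule.subset_span ⟨i, rfl⟩)
    exact U.add_mem hx hy
  zero_mem' := by
    refine ⟨S.zero_mem, ?_⟩
    rw [rowSpace, Submodule.span_le]
    rintro v ⟨i, rfl⟩
    exact U.zero_mem
  smul_mem' := by
    rintro c X ⟨hXS, hXU⟩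
    refine ⟨S.smul_mem c hXS, ?_⟩
    rw [rowSpace, Submodule.span_le]
    rintro v ⟨i, rfl⟩
    exact U.smul_mem c (hXU (Submodule.subset_span ⟨i, rfl⟩))

/-- Row support of a set of matrices: the sum of the row spaces of its elements. -/
noncomputable def rowSupport {a b : ℕ} (D : Submodule K (Matrix (Fin a) (Fin b) K)) :
    Submodule K (Fin b → K) :=
  ⨆ M ∈ D, rowSpace M

/-- Column support of a set of matrices: the sum of the column spaces of its elements. -/
noncomputable def colSupport {a b : ℕ} (D : Submodule K (Matrix (Fin a) (Fin b) K)) :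
    Submodule K (Fin a → K) :=
  ⨆ M ∈ D, colSpace M

/-- The hyperplane `u^⊥ = {v : ∑ i, u i * v i = 0}`. -/
noncomputable def perp {a : ℕ} (u : Fin a → K) : Submodule K (Fin a → K) where
  carrier := {v | ∑ i, u i * v i = 0}
  add_mem' := by
    intro v w hv hw
    simp only [Set.mem_setOf_eq, Pi.add_apply, mul_add, Finset.sum_add_distrib] at *
    simp [hv, hw]
  zero_mem' := by simp
  smul_mem' := by
    intro c v hv
    simp only [Set.mem_setOf_eq, Pi.smul_apply, smul_eq_mul] at *
    have : ∑ i, u i * (c * v i) = c * ∑ i, u i * v i := by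
      rw [Finset.mul_sum]; congr 1; ext i; ring
    simp [this, hv]

/-- The orthogonal complement `U^⊥ = {v : ∀ u ∈ U, ∑ i, u i * v i = 0}`. -/
noncomputable def perpSub {a : ℕ} (U : Submodule K (Fin a → K)) : Submodule K (Fin a → K) :=
  ⨅ u ∈ U, perp u

/-- The slices of the column-system: `(X l) i j = (B i) j l`. -/
def colSlices {m n k : ℕ} (B : Fin k → Matrix (Fin m) (Fin n) K) :
    Fin n → Matrix (Fin k) (Fin m) K :=
  fun l => Matrix.of fun i j => B i j l

/-- The slices of the row-system: `(Y j) l i = (B i) j l`. -/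
def rowSlices {m n k : ℕ} (B : Fin k → Matrix (Fin m) (Fin n) K) :
    Fin m → Matrix (Fin n) (Fin k) K :=
  fun j => Matrix.of fun l i => B i j l

/-- The linear map `u ↦ ∑ i, u i • B i` (i.e. `u ↦ m₁(T,u)`). -/
noncomputable def combMap {m n k : ℕ} (B : Fin k → Matrix (Fin m) (Fin n) K) :
    (Fin k → K) →ₗ[K] Matrix (Fin m) (Fin n) K where
  toFun u := ∑ i, u i • B i
  map_add' := by intro u v; simp [add_smul, Finset.sum_add_distrib]
  map_smul' := by intro c u; simp [smul_smul, Finset.smul_sum]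

/-- The `t`-th row-generalized rank weight. -/
noncomputable def dRow {a b : ℕ} (C : Submodule K (Matrix (Fin a) (Fin b) K)) (t : ℕ) : ℕ :=
  sInf {r | ∃ D : Submodule K (Matrix (Fin a) (Fin b) K),
    D ≤ C ∧ Module.finrank K D = t ∧ Module.finrank K (rowSupport D) = r}

/-- The `t`-th column-generalized rank weight. -/
noncomputable def dCol {a b : ℕ} (C : Submodule K (Matrix (Fin a) (Fin b) K)) (t : ℕ) : ℕ :=
  sInf {r | ∃ D : Submodule K (Matrix (Fin a) (Fin b) K),
    D ≤ C ∧ Module.finrank K D = t ∧ Module.finrank K (colSupport D) = r}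

end Defs

/-!
The code and its column-system are the two contractions `u ↦ ∑ i, u i • B i` and
`v ↦ ∑ l, v l • X l` of the tensor with entries `B i j l`, so column `j` of `∑ l, v l • X l` is
orthogonal to `u` exactly when row `j` of `∑ i, u i • B i` is orthogonal to `v`. Hence if `D` is the
image of `U` under the first contraction, the preimage of `S_c(U^⊥)` under the second is
`(rowSupport D)^⊥`, while the kernel of the second is `(rowSupport C)^⊥`. Rank-nullity gives
`dim S_c(U^⊥) + dim (rowSupport D) = dim (rowSupport C)`, which turns lower bounds on the weights
into upper bounds on `dim S_c(W)` for `W = U^⊥`.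
-/

section LinearAlgebra

variable {R K V V₂ : Type*}

theorem exists_le_finrank_eq [Ring R] [Nontrivial R] [StrongRankCondition R] [AddCommGroup V]
    [Module R V] (C : Submodule R V) {t : ℕ} (ht : t ≤ Module.finrank R C) :
    ∃ D ≤ C, Module.finrank R D = t := by
  obtain ⟨f, hf⟩ := exists_linearIndependent_of_le_finrank ht
  have hf' : LinearIndependent R (C.subtype ∘ f) := hf.map' C.subtype C.ker_subtype
  refine ⟨Submodule.span R (Set.range (C.subtype ∘ f)), ?_, ?_⟩
  · exact Submodule.span_le.2 (Set.range_subset_iff.2 fun i => (f i).2)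
  · rw [finrank_span_eq_card hf', Fintype.card_fin]

theorem finrank_add_finrank_ker_eq_finrank_comap [DivisionRing K] [AddCommGroup V] [Module K V]
    [FiniteDimensional K V] [AddCommGroup V₂] [Module K V₂] {f : V →ₗ[K] V₂}
    {p : Submodule K V₂} (hp : p ≤ LinearMap.range f) :
    Module.finrank K p + Module.finrank K (LinearMap.ker f) =
      Module.finrank K (p.comap f) := by
  have hrange : LinearMap.range (f.domRestrict (p.comap f)) = p := by
    rw [LinearMap.range_domRestrict, Submodule.map_comap_eq_self hp]
  have hker : Module.finrank K (LinearMap.ker (f.domRestrict (p.comap f))) =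
      Module.finrank K (LinearMap.ker f) := by
    rw [LinearMap.ker_domRestrict]
    exact (Submodule.submoduleOfEquivOfLe (LinearMap.ker_le_comap f)).finrank_eq
  rw [← LinearMap.finrank_range_add_finrank_ker (f.domRestrict (p.comap f)), hrange, hker]

end LinearAlgebra

section DotProduct

variable {ι R K : Type*} [Fintype ι] [CommRing R] [Field K] {a : ℕ}

theorem nondegenerate_dotProductBilin :
    (dotProductBilin R R : LinearMap.BilinForm R (ι → R)).Nondegenerate :=
  ⟨fun v hv => dotProduct_eq_zero v hv,
    fun v hv => dotProduct_eq_zero v fun w => (dotProduct_comm v w).trans (hv w)⟩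

theorem isRefl_dotProductBilin :
    LinearMap.BilinForm.IsRefl (dotProductBilin R R : LinearMap.BilinForm R (ι → R)) :=
  fun v w h => (dotProduct_comm w v).trans h

theorem mem_perpSub {U : Submodule K (Fin a → K)} {v : Fin a → K} :
    v ∈ perpSub U ↔ ∀ u ∈ U, u ⬝ᵥ v = 0 := by
  simp only [perpSub, Submodule.mem_iInf]
  rfl

theorem perpSub_eq_orthogonal (U : Submodule K (Fin a → K)) :
    perpSub U = LinearMap.BilinForm.orthogonal (dotProductBilin K K) U :=
  Submodule.ext fun _ => mem_perpSub

theorem finrank_add_finrank_perpSub (U : Submodule K (Fin a → K)) :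
    Module.finrank K U + Module.finrank K (perpSub U) = a := by
  rw [perpSub_eq_orthogonal,
    LinearMap.BilinForm.finrank_orthogonal nondegenerate_dotProductBilin,
    Nat.add_sub_of_le (Submodule.finrank_le U), Module.finrank_fin_fun]

theorem perpSub_perpSub (U : Submodule K (Fin a → K)) : perpSub (perpSub U) = U := by
  rw [perpSub_eq_orthogonal, perpSub_eq_orthogonal,
    LinearMap.BilinForm.orthogonal_orthogonal nondegenerate_dotProductBilin isRefl_dotProductBilin]

theorem perpSub_top : perpSub (⊤ : Submodule K (Fin a → K)) = ⊥ := by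
  rw [perpSub_eq_orthogonal, LinearMap.BilinForm.orthogonal_top_eq_bot
    nondegenerate_dotProductBilin]

end DotProduct

section Support

variable {K : Type*} [Field K] {m n : ℕ}

theorem colSpace_le_iff {M : Matrix (Fin m) (Fin n) K} {U : Submodule K (Fin m → K)} :
    colSpace M ≤ U ↔ ∀ j, M.col j ∈ U :=
  Submodule.span_le.trans Set.range_subset_iff

theorem colSpace_le_perpSub_iff {M : Matrix (Fin m) (Fin n) K} {U : Submodule K (Fin m → K)} :
    colSpace M ≤ perpSub U ↔ ∀ u ∈ U, u ᵥ* M = 0 := by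
  simp only [colSpace_le_iff, mem_perpSub, funext_iff]
  exact ⟨fun h u hu j => h j u hu, fun h j u hu => h u hu j⟩

theorem rowSpace_le_iff {M : Matrix (Fin m) (Fin n) K} {U : Submodule K (Fin n → K)} :
    rowSpace M ≤ U ↔ ∀ i, M.row i ∈ U :=
  Submodule.span_le.trans Set.range_subset_iff

theorem rowSupport_le_iff {D : Submodule K (Matrix (Fin m) (Fin n) K)}
    {U : Submodule K (Fin n → K)} : rowSupport D ≤ U ↔ ∀ M ∈ D, ∀ i, M.row i ∈ U := by
  simp only [rowSupport, iSup_le_iff, rowSpace_le_iff]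

theorem mem_perpSub_iff_le_perp {U : Submodule K (Fin n → K)} {v : Fin n → K} :
    v ∈ perpSub U ↔ U ≤ perp v :=
  mem_perpSub.trans (forall₂_congr fun u _ => by rw [dotProduct_comm]; rfl)

theorem mem_perpSub_rowSupport_iff {D : Submodule K (Matrix (Fin m) (Fin n) K)}
    {v : Fin n → K} : v ∈ perpSub (rowSupport D) ↔ ∀ M ∈ D, M *ᵥ v = 0 := by
  rw [mem_perpSub_iff_le_perp, rowSupport_le_iff]
  simp only [funext_iff]
  refine forall₃_congr fun M _ i => ?_
  change v ⬝ᵥ M.row i = 0 ↔ M.row i ⬝ᵥ v = 0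
  rw [dotProduct_comm]

theorem Sc_bot (S : Submodule K (Matrix (Fin m) (Fin n) K)) : Sc S ⊥ = ⊥ := by
  refine (Submodule.eq_bot_iff _).2 fun X hX => ?_
  ext i j
  exact congrFun ((Submodule.mem_bot K).1 (colSpace_le_iff.1 hX.2 j)) i

end Support

section GeneralizedWeight

variable {K : Type*} [Field K] {m n k : ℕ}

theorem le_dRow_iff {C : Submodule K (Matrix (Fin m) (Fin n) K)} {t s : ℕ}
    (ht : t ≤ Module.finrank K C) :
    s ≤ dRow C t ↔
      ∀ D ≤ C, Module.finrank K D = t → s ≤ Module.finrank K (rowSupport D) := by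
  obtain ⟨D₀, hD₀, hD₀t⟩ := exists_le_finrank_eq C ht
  have hne : {r | ∃ D ≤ C, Module.finrank K D = t ∧
      Module.finrank K (rowSupport D) = r}.Nonempty := ⟨_, D₀, hD₀, hD₀t, rfl⟩
  rw [dRow, le_csInf_iff' hne]
  constructor
  · exact fun h D hD hDt => h ⟨D, hD, hDt, rfl⟩
  · rintro h _ ⟨D, hD, hDt, rfl⟩
    exact h D hD hDt

theorem range_combMap (B : Fin k → Matrix (Fin m) (Fin n) K) :
    LinearMap.range (combMap B) = Submodule.span K (Set.range B) :=
  Fintype.range_linearCombination K B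

theorem combMap_injective {B : Fin k → Matrix (Fin m) (Fin n) K} (hB : LinearIndependent K B) :
    Function.Injective (combMap B) :=
  hB.fintypeLinearCombination_injective

theorem le_dRow_span_iff {B : Fin k → Matrix (Fin m) (Fin n) K} (hB : LinearIndependent K B)
    {t s : ℕ} (ht : t ≤ k) :
    s ≤ dRow (Submodule.span K (Set.range B)) t ↔
      ∀ U : Submodule K (Fin k → K), Module.finrank K U = t →
        s ≤ Module.finrank K (rowSupport (U.map (combMap B))) := by
  have finrank_map (U : Submodule K (Fin k → K)) :
      Module.finrank K (U.map (combMap B)) = Module.finrank K U :=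
    (Submodule.equivMapOfInjective _ (combMap_injective hB) U).finrank_eq.symm
  rw [le_dRow_iff (by rwa [finrank_span_eq_card hB, Fintype.card_fin]), ← range_combMap]
  constructor
  · exact fun h U hU => h _ LinearMap.map_le_range ((finrank_map U).trans hU)
  · intro h D hD hDt
    rw [← Submodule.map_comap_eq_self hD] at hDt ⊢
    exact h _ ((finrank_map _).symm.trans hDt)

end GeneralizedWeight

section ColumnSystem

variable {K : Type*} [Field K] {m n k : ℕ}

/-- The parametrization `v ↦ ∑ l, v l • X l` of the column-system by `K^n`; it contracts the
tensor `B i j l` along `l`, as `combMap` contracts it along `i`. -/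
noncomputable def colCombMap (B : Fin k → Matrix (Fin m) (Fin n) K) :
    (Fin n → K) →ₗ[K] Matrix (Fin k) (Fin m) K :=
  Fintype.linearCombination K (colSlices B)

theorem range_colCombMap (B : Fin k → Matrix (Fin m) (Fin n) K) :
    LinearMap.range (colCombMap B) = Submodule.span K (Set.range (colSlices B)) :=
  Fintype.range_linearCombination K (colSlices B)

theorem colCombMap_apply (B : Fin k → Matrix (Fin m) (Fin n) K) (v : Fin n → K)
    (i : Fin k) (j : Fin m) : colCombMap B v i j = (B i *ᵥ v) j := by
  simp only [colCombMap, colSlices, Fintype.linearCombination_apply, Matrix.sum_apply,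
    Matrix.smul_apply, Matrix.of_apply, smul_eq_mul, mulVec, dotProduct, mul_comm]

theorem vecMul_colCombMap (B : Fin k → Matrix (Fin m) (Fin n) K) (u : Fin k → K)
    (v : Fin n → K) : u ᵥ* colCombMap B v = combMap B u *ᵥ v := by
  ext j
  change ∑ i, u i * colCombMap B v i j = ((∑ i, u i • B i) *ᵥ v) j
  simp only [colCombMap_apply, Matrix.sum_mulVec, Matrix.smul_mulVec, Finset.sum_apply,
    Pi.smul_apply, smul_eq_mul]

theorem comap_colCombMap_Sc_perpSub (B : Fin k → Matrix (Fin m) (Fin n) K)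
    (U : Submodule K (Fin k → K)) :
    (Sc (LinearMap.range (colCombMap B)) (perpSub U)).comap (colCombMap B) =
      perpSub (rowSupport (U.map (combMap B))) := by
  ext v
  calc colCombMap B v ∈ Sc (LinearMap.range (colCombMap B)) (perpSub U)
    _ ↔ colSpace (colCombMap B v) ≤ perpSub U := and_iff_right ⟨v, rfl⟩
    _ ↔ ∀ u ∈ U, combMap B u *ᵥ v = 0 := by
      simp only [colSpace_le_perpSub_iff, vecMul_colCombMap]
    _ ↔ v ∈ perpSub (rowSupport (U.map (combMap B))) := by
      simp only [mem_perpSub_rowSupport_iff, Submodule.mem_map, forall_exists_index, and_imp,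
        forall_apply_eq_imp_iff₂]

theorem ker_colCombMap (B : Fin k → Matrix (Fin m) (Fin n) K) :
    LinearMap.ker (colCombMap B) = perpSub (rowSupport (LinearMap.range (combMap B))) := by
  rw [← Submodule.map_top, ← comap_colCombMap_Sc_perpSub, perpSub_top, Sc_bot,
    Submodule.comap_bot]

theorem finrank_Sc_perpSub_add_finrank_rowSupport (B : Fin k → Matrix (Fin m) (Fin n) K)
    (U : Submodule K (Fin k → K)) :
    Module.finrank K (Sc (Submodule.span K (Set.range (colSlices B))) (perpSub U)) +
        Module.finrank K (rowSupport (U.map (combMap B))) =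
      Module.finrank K (rowSupport (Submodule.span K (Set.range B))) := by
  have hfib := finrank_add_finrank_ker_eq_finrank_comap (f := colCombMap B)
    (p := Sc (LinearMap.range (colCombMap B)) (perpSub U)) fun _ hX => hX.1
  rw [ker_colCombMap, comap_colCombMap_Sc_perpSub, range_colCombMap, range_combMap] at hfib
  have hU := finrank_add_finrank_perpSub (rowSupport (U.map (combMap B)))
  have hC := finrank_add_finrank_perpSub (rowSupport (Submodule.span K (Set.range B)))
  omega

end ColumnSystem

theorem stmt6_general {K : Type*} [Field K] {m n k : ℕ}
    {B : Fin k → Matrix (Fin m) (Fin n) K} (hB : LinearIndependent K B)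
    {t s : ℕ} (ht : t ≤ k) :
    s ≤ dRow (Submodule.span K (Set.range B)) t ↔
      ∀ W : Submodule K (Fin k → K), Module.finrank K W = k - t →
        Module.finrank K (Sc (Submodule.span K (Set.range (colSlices B))) W) + s ≤
          Module.finrank K (rowSupport (Submodule.span K (Set.range B))) := by
  rw [le_dRow_span_iff hB ht]
  constructor
  · intro h W hW
    have hdim := finrank_add_finrank_perpSub W
    have hs := h (perpSub W) (by omega)
    rw [← finrank_Sc_perpSub_add_finrank_rowSupport B (perpSub W), perpSub_perpSub]
    exact Nat.add_le_add_left hs _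
  · intro h U hU
    have hdim := finrank_add_finrank_perpSub U
    have hs := h (perpSub U) (by omega)
    rw [← finrank_Sc_perpSub_add_finrank_rowSupport B U] at hs
    exact Nat.le_of_add_le_add_left hs

/-- For a column-nondegenerate code `C` with associated column-system `S`,
`d_t^r(C) ≥ s` iff every subspace `W ⊆ K^k` of dimension `k − t` satisfies
`dim S_c(W) ≤ n − s`. -/
theorem stmt6 {K : Type*} [Field K] {m n k : ℕ}
    (hm : 0 < m) (hn : 0 < n) (hk : 0 < k)
    (B : Fin k → Matrix (Fin m) (Fin n) K) (hB : LinearIndependent K B)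
    (C : Submodule K (Matrix (Fin m) (Fin n) K))
    (hC : C = Submodule.span K (Set.range B))
    (hnd : rowSupport C = ⊤)
    (S : Submodule K (Matrix (Fin k) (Fin m) K))
    (hS : S = Submodule.span K (Set.range (colSlices B)))
    (t s : ℕ) (ht1 : 1 ≤ t) (htk : t ≤ k) (hs1 : 1 ≤ s) (hsn : s ≤ n) :
    s ≤ dRow C t ↔
      ∀ W : Submodule K (Fin k → K), Module.finrank K W = k - t →
        Module.finrank K (Sc S W) ≤ n - s := by
  subst hC hS
  rw [stmt6_general hB htk, hnd, finrank_top, Module.finrank_fin_fun]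
  simp only [Nat.le_sub_iff_add_le hsn]
end

section
/- Let F be a finite field and let B₁,…,B_k ∈ F^{m×n} be a linearly independent family of matrices generating a matrix rank-metric code C = span_F{B₁,…,B_k} that is both column-nondegenerate and row-nondegenerate, with associated column-system S and row-system T. Then every nonzero X ∈ S has rank(X) = m (column-faithfulness) if and only if every nonzero Y ∈ T has rank(Y) = n (row-faithfulness). -/
open Matrix

/-!
The generators define the bilinear map `β(w, v) = (wᵀ Bᵢ v)ᵢ` from `F^m × F^n` to `F^k`. The
elements of `S` are the matrices of the partial maps `w ↦ β(w, v)`, and those of `T` the transposed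
matrices of the partial maps `v ↦ β(w, v)`. Nondegeneracy makes the slices linearly independent, so
that these matrices vanish only for `v = 0`, respectively `w = 0`; full rank then says that the
partial map is injective. Both kinds of faithfulness thus say that `β(w, v) = 0` only if `w = 0` or
`v = 0`, a condition symmetric in the two arguments.
-/

section Rank

variable {F ι κ : Type*} [Field F] [Fintype κ]

theorem rank_eq_card_iff_forall_mulVec_eq_zero (A : Matrix ι κ F) :
    A.rank = Fintype.card κ ↔ ∀ x, A *ᵥ x = 0 → x = 0 := by
  rw [← Matrix.ker_mulVecLin_eq_bot_iff, ← Submodule.finrank_eq_zero (R := F), Matrix.rank,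
    ← Module.finrank_fintype_fun_eq_card F, ← A.mulVecLin.finrank_range_add_finrank_ker]
  exact left_eq_add

theorem rank_eq_card_iff_forall_vecMul_eq_zero [Fintype ι] (A : Matrix ι κ F) :
    A.rank = Fintype.card ι ↔ ∀ x, x ᵥ* A = 0 → x = 0 := by
  simp only [← A.rank_transpose, rank_eq_card_iff_forall_mulVec_eq_zero, mulVec_transpose]

end Rank

theorem forall_mem_span_range_ne_zero_iff {R M ι : Type*} [Ring R] [AddCommGroup M] [Module R M]
    [Fintype ι] {x : ι → M} (hx : LinearIndependent R x) (P : M → Prop) :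
    (∀ y ∈ Submodule.span R (Set.range x), y ≠ 0 → P y) ↔
      ∀ c : ι → R, c ≠ 0 → P (∑ i, c i • x i) := by
  have sum_eq_zero_iff (c : ι → R) : ∑ i, c i • x i = 0 ↔ c = 0 :=
    ⟨fun h => funext (Fintype.linearIndependent_iff.mp hx c h), fun h => by simp [h]⟩
  simp only [Submodule.mem_span_range_iff_exists_fun, forall_exists_index,
    forall_apply_eq_imp_iff, ne_eq, sum_eq_zero_iff]

section Supports

variable {F : Type*} [Field F] {a b : ℕ}

theorem perp_eq_top_iff {v : Fin a → F} : perp v = ⊤ ↔ v = 0 :=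
  Submodule.eq_top_iff'.trans dotProduct_eq_zero_iff

theorem rowSpace_le_perp_iff {M : Matrix (Fin a) (Fin b) F} {v : Fin b → F} :
    rowSpace M ≤ perp v ↔ M *ᵥ v = 0 := by
  rw [rowSpace, Submodule.span_le, Set.range_subset_iff, funext_iff]
  exact forall_congr' fun i => by rw [mulVec, dotProduct_comm]; rfl

theorem colSpace_le_perp_iff {M : Matrix (Fin a) (Fin b) F} {w : Fin a → F} :
    colSpace M ≤ perp w ↔ w ᵥ* M = 0 := by
  rw [← mulVec_transpose]
  exact rowSpace_le_perp_iff

variable {ι : Type*} {B : ι → Matrix (Fin a) (Fin b) F}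

theorem rowSupport_span_range_le_perp_iff {v : Fin b → F} :
    rowSupport (Submodule.span F (Set.range B)) ≤ perp v ↔ ∀ i, B i *ᵥ v = 0 := by
  simp only [rowSupport, iSup_le_iff, rowSpace_le_perp_iff]
  change Submodule.span F (Set.range B) ≤ ((mulVecBilin F F).flip v).ker ↔ _
  rw [Submodule.span_le, Set.range_subset_iff]
  rfl

theorem colSupport_span_range_le_perp_iff {w : Fin a → F} :
    colSupport (Submodule.span F (Set.range B)) ≤ perp w ↔ ∀ i, w ᵥ* B i = 0 := by
  simp only [colSupport, iSup_le_iff, colSpace_le_perp_iff]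
  change Submodule.span F (Set.range B) ≤ (vecMulBilin F F w).ker ↔ _
  rw [Submodule.span_le, Set.range_subset_iff]
  rfl

end Supports

/-- The bilinear map `β(w, v) = (wᵀ Bᵢ v)ᵢ` with coordinate matrices `Bᵢ` is nonsingular:
`β(w, v)` vanishes only if `w` or `v` does. Full rank of the nonzero elements of the column-system
and of the row-system are both compared with this condition. -/
def IsNonsingular {F ι μ ν : Type*} [CommSemiring F] [Fintype μ] [Fintype ν]
    (B : ι → Matrix μ ν F) : Prop :=
  ∀ (w : μ → F) (v : ν → F), (∀ i, w ⬝ᵥ B i *ᵥ v = 0) → w = 0 ∨ v = 0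

section Slices

variable {F : Type*} [Field F] {m n k : ℕ} (B : Fin k → Matrix (Fin m) (Fin n) F)

theorem sum_smul_colSlices (v : Fin n → F) :
    ∑ l, v l • colSlices B l = Matrix.of fun i => B i *ᵥ v := by
  ext i j
  simp [Matrix.sum_apply, colSlices, mulVec, dotProduct, mul_comm]

theorem sum_smul_rowSlices (w : Fin m → F) :
    ∑ j, w j • rowSlices B j = (Matrix.of fun i => w ᵥ* B i)ᵀ := by
  ext l i
  simp [Matrix.sum_apply, rowSlices, vecMul, dotProduct]

theorem sum_smul_colSlices_mulVec (v : Fin n → F) (w : Fin m → F) :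
    (∑ l, v l • colSlices B l) *ᵥ w = fun i => w ⬝ᵥ B i *ᵥ v := by
  rw [sum_smul_colSlices]
  exact funext fun i => dotProduct_comm _ _

theorem vecMul_sum_smul_rowSlices (w : Fin m → F) (v : Fin n → F) :
    v ᵥ* (∑ j, w j • rowSlices B j) = fun i => w ⬝ᵥ B i *ᵥ v := by
  rw [sum_smul_rowSlices, vecMul_transpose]
  exact funext fun i => (dotProduct_mulVec w (B i) v).symm

variable {B}

theorem linearIndependent_colSlices
    (h : rowSupport (Submodule.span F (Set.range B)) = ⊤) :
    LinearIndependent F (colSlices B) := by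
  refine Fintype.linearIndependent_iff.mpr fun v hv => congrFun (perp_eq_top_iff.mp ?_)
  rw [sum_smul_colSlices] at hv
  exact top_le_iff.mp (h ▸ rowSupport_span_range_le_perp_iff.mpr (congrFun hv))

theorem linearIndependent_rowSlices
    (h : colSupport (Submodule.span F (Set.range B)) = ⊤) :
    LinearIndependent F (rowSlices B) := by
  refine Fintype.linearIndependent_iff.mpr fun w hw => congrFun (perp_eq_top_iff.mp ?_)
  rw [sum_smul_rowSlices, transpose_eq_zero] at hw
  exact top_le_iff.mp (h ▸ colSupport_span_range_le_perp_iff.mpr (congrFun hw))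

theorem forall_mem_span_colSlices_rank_eq_iff (h : LinearIndependent F (colSlices B)) :
    (∀ X ∈ Submodule.span F (Set.range (colSlices B)), X ≠ 0 → X.rank = m) ↔
      IsNonsingular B := by
  have rank_iff (X : Matrix (Fin k) (Fin m) F) : X.rank = m ↔ ∀ w, X *ᵥ w = 0 → w = 0 := by
    simpa only [Fintype.card_fin] using rank_eq_card_iff_forall_mulVec_eq_zero X
  simp only [forall_mem_span_range_ne_zero_iff h, rank_iff, sum_smul_colSlices_mulVec]
  exact ⟨fun full w v hβ => or_iff_not_imp_right.mpr fun hv => full v hv w (funext hβ),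
    fun hB v hv w hβ => (hB w v (congrFun hβ)).resolve_right hv⟩

theorem forall_mem_span_rowSlices_rank_eq_iff (h : LinearIndependent F (rowSlices B)) :
    (∀ Y ∈ Submodule.span F (Set.range (rowSlices B)), Y ≠ 0 → Y.rank = n) ↔
      IsNonsingular B := by
  have rank_iff (Y : Matrix (Fin n) (Fin k) F) : Y.rank = n ↔ ∀ v, v ᵥ* Y = 0 → v = 0 := by
    simpa only [Fintype.card_fin] using rank_eq_card_iff_forall_vecMul_eq_zero Y
  simp only [forall_mem_span_range_ne_zero_iff h, rank_iff, vecMul_sum_smul_rowSlices]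
  exact ⟨fun full w v hβ => or_iff_not_imp_left.mpr fun hw => full w hw v (funext hβ),
    fun hB w hw v hβ => (hB w v (congrFun hβ)).resolve_left hw⟩

end Slices

theorem stmt11_general {F : Type*} [Field F] {m n k : ℕ} (B : Fin k → Matrix (Fin m) (Fin n) F)
    (hcolnd : rowSupport (Submodule.span F (Set.range B)) = ⊤)
    (hrownd : colSupport (Submodule.span F (Set.range B)) = ⊤) :
    (∀ X ∈ Submodule.span F (Set.range (colSlices B)), X ≠ 0 → X.rank = m) ↔
      (∀ Y ∈ Submodule.span F (Set.range (rowSlices B)), Y ≠ 0 → Y.rank = n) :=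
  (forall_mem_span_colSlices_rank_eq_iff (linearIndependent_colSlices hcolnd)).trans
    (forall_mem_span_rowSlices_rank_eq_iff (linearIndependent_rowSlices hrownd)).symm

/-- For a column- and row-nondegenerate code `C` with associated
column-system `S` and row-system `T`, column-faithfulness (every nonzero `X ∈ S` has
rank `m`) is equivalent to row-faithfulness (every nonzero `Y ∈ T` has rank `n`). -/
theorem stmt11 {F : Type*} [Field F] [Fintype F] {m n k : ℕ}
    (hm : 0 < m) (hn : 0 < n) (hk : 0 < k)
    (B : Fin k → Matrix (Fin m) (Fin n) F) (hB : LinearIndependent F B)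
    (C : Submodule F (Matrix (Fin m) (Fin n) F))
    (hC : C = Submodule.span F (Set.range B))
    (hcolnd : rowSupport C = ⊤) (hrownd : colSupport C = ⊤)
    (S : Submodule F (Matrix (Fin k) (Fin m) F))
    (hS : S = Submodule.span F (Set.range (colSlices B)))
    (T : Submodule F (Matrix (Fin n) (Fin k) F))
    (hT : T = Submodule.span F (Set.range (rowSlices B))) :
    (∀ X ∈ S, X ≠ 0 → X.rank = m) ↔ (∀ Y ∈ T, Y ≠ 0 → Y.rank = n) := by
  subst hC hS hT
  exact stmt11_general B hcolnd hrownd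
end
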